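/- arXiv:2603.00982 — 3 statements merged into one kernel-verified Lean document; each statement's English description precedes it below -/
import Mathlib

section
/- Suppose γ ≥ h. For each sufficiently small α > 0 let Z(α) ≥ 0 be a solution of the steady-state robust-queueing fixed-point equation Z(α) = sup_{u ≥ 0} { ρ(α)u − u/F̄(α·Z(α)) + b·√(ρ(α)·u·I_w(λ(α)u)/μ) }. Then there exists a finite constant Ẑ > 0 such that lim_{α↓0} α^h·Z(α) = Ẑ, and Ẑ is the unique positive root of the equation −𝟙{γ = h}·c·Ẑ + (F^{(k)}(0)/k!)·Ẑ^{k+1} = c_x²·b²/(4μ). -/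
open Filter Set Topology

open scoped Classical

/-- A function on `[0, ∞)` whose first `k - 1` derivatives vanish at `0` behaves like
`F⁽ᵏ⁾(0) / k! * x ^ k` near `0`. -/
lemma tendsto_div_pow_of_iteratedDerivWithin_eq_zero {k : ℕ} {F : ℝ → ℝ}
    (hF : ContDiffOn ℝ k F (Ici 0))
    (h0 : ∀ j < k, iteratedDerivWithin j F (Ici 0) 0 = 0) :
    Tendsto (fun x => F x / x ^ k) (𝓝[>] 0)
      (𝓝 (iteratedDerivWithin k F (Ici 0) 0 / (Nat.factorial k))) := by
  have ht := taylor_isLittleO (convex_Ici (0 : ℝ)) self_mem_Ici hF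
  have hT : ∀ x, taylorWithinEval F k (Ici 0) 0 x
      = iteratedDerivWithin k F (Ici 0) 0 / (Nat.factorial k) * x ^ k := by
    intro x
    rw [taylor_within_apply, Finset.sum_range_succ, Finset.sum_eq_zero]
    · simp only [sub_zero, smul_eq_mul, zero_add]
      ring
    · intro j hj
      rw [h0 j (Finset.mem_range.1 hj), smul_zero]
  have ht' := (ht.mono (nhdsWithin_mono 0 Ioi_subset_Ici_self)).tendsto_div_nhds_zero
  have := ht'.add_const (iteratedDerivWithin k F (Ici 0) 0 / (Nat.factorial k))
  rw [zero_add] at this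
  refine this.congr' ?_
  filter_upwards [self_mem_nhdsWithin] with x hx
  have hx : x ^ k ≠ 0 := pow_ne_zero _ (ne_of_gt hx)
  rw [hT, sub_zero]
  field_simp
  ring

/-- The concave function `u ↦ -δ u + b √(A u)` is bounded by its maximum. -/
lemma neg_mul_add_mul_sqrt_le {δ b A u : ℝ} (hδ : 0 < δ) (hA : 0 ≤ A) (hu : 0 ≤ u) :
    -δ * u + b * √(A * u) ≤ b ^ 2 * A / (4 * δ) := by
  have hs : √(A * u) ^ 2 = A * u := Real.sq_sqrt (mul_nonneg hA hu)
  have : b * √(A * u) ≤ δ * u + b ^ 2 * A / (4 * δ) := by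
    apply le_of_abs_le
    apply abs_le_of_sq_le_sq _ (by positivity)
    have e : (δ * u + b ^ 2 * A / (4 * δ)) ^ 2
        = (b * √(A * u)) ^ 2 + (δ * u - b ^ 2 * A / (4 * δ)) ^ 2 := by
      rw [mul_pow, hs]
      field_simp
      ring
    rw [e]
    linarith [sq_nonneg (δ * u - b ^ 2 * A / (4 * δ))]
  linarith

/-- The robust-queueing objective with drift `-δ` and traffic intensity `ρ`. -/
noncomputable def rqObjective (Iw : ℝ → ℝ) (μ b ρ δ u : ℝ) : ℝ :=
  -δ * u + b * √(ρ * u * Iw (ρ * μ * u) / μ)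

section Objective

variable {Iw : ℝ → ℝ} {μ b ρ δ z C : ℝ}

lemma rqObjective_le {B u : ℝ} (hμ : 0 < μ) (hb : 0 < b) (hρ : 0 < ρ) (hδ : 0 < δ) (hB : 0 ≤ B)
    (hu : 0 ≤ u) (h : Iw (ρ * μ * u) ≤ B) :
    rqObjective Iw μ b ρ δ u ≤ b ^ 2 * (ρ * B / μ) / (4 * δ) := by
  refine le_trans ?_ (neg_mul_add_mul_sqrt_le hδ (by positivity) hu)
  unfold rqObjective
  have : ρ * u * Iw (ρ * μ * u) / μ ≤ ρ * B / μ * u := by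
    rw [div_mul_eq_mul_div, mul_right_comm ρ B u]
    gcongr
  gcongr

lemma mul_le_of_isLUB_rqObjective (hμ : 0 < μ) (hb : 0 < b) (hρ : 0 < ρ) (hδ : 0 < δ)
    (hC0 : 0 ≤ C) (hC : ∀ t, 0 ≤ t → Iw t ≤ C)
    (hz : IsLUB (rqObjective Iw μ b ρ δ '' Ici 0) z) :
    δ * z ≤ b ^ 2 * (ρ * C / μ) / 4 := by
  have : z ≤ b ^ 2 * (ρ * C / μ) / (4 * δ) := by
    apply hz.2
    rintro _ ⟨u, hu, rfl⟩
    have hu : 0 ≤ u := hu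
    exact rqObjective_le hμ hb hρ hδ hC0 hu (hC _ (by positivity))
  calc δ * z ≤ δ * (b ^ 2 * (ρ * C / μ) / (4 * δ)) := by gcongr
    _ = _ := by field_simp

/-- A finite robust-queueing supremum forces a strictly negative drift. -/
lemma drift_pos_of_isLUB_rqObjective {cx2 : ℝ} (hcx2 : 0 < cx2) (hI : Tendsto Iw atTop (𝓝 cx2))
    (hμ : 0 < μ) (hb : 0 < b) (hρ : 0 < ρ)
    (hz : IsLUB (rqObjective Iw μ b ρ δ '' Ici 0) z) : 0 < δ := by
  by_contra! hδ
  have h1 : Tendsto (fun u : ℝ => ρ * μ * u) atTop atTop :=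
    tendsto_id.const_mul_atTop (by positivity)
  have h2 : Tendsto (fun u : ℝ => ρ * u * Iw (ρ * μ * u) / μ) atTop atTop := by
    apply Tendsto.atTop_div_const hμ
    exact (tendsto_id.const_mul_atTop hρ).atTop_mul_pos hcx2 (hI.comp h1)
  have h3 : Tendsto (fun u : ℝ => b * √(ρ * u * Iw (ρ * μ * u) / μ)) atTop atTop :=
    (Real.tendsto_sqrt_atTop.comp h2).const_mul_atTop hb
  obtain ⟨u, hu, hu0⟩ := ((h3.eventually_gt_atTop z).and (eventually_ge_atTop 0)).exists
  have := hz.1 ⟨u, hu0, rfl⟩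
  unfold rqObjective at this
  nlinarith

end Objective

/-- As the drift vanishes, the robust-queueing supremum is asymptotic to its value for the
constant dispersion `cx2`. -/
lemma tendsto_mul_of_isLUB_rqObjective {ι : Type*} {l : Filter ι} {Iw : ℝ → ℝ}
    {μ b cx2 C : ℝ} {ρ δ z : ι → ℝ} (hμ : 0 < μ) (hb : 0 < b) (hcx2 : 0 < cx2)
    (hC : ∀ t, 0 ≤ t → Iw t ≤ C) (hC0 : 0 ≤ C) (hI : Tendsto Iw atTop (𝓝 cx2))
    (hρ : Tendsto ρ l (𝓝 1)) (hδ : Tendsto δ l (𝓝 0)) (hδ0 : ∀ᶠ i in l, 0 < δ i)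
    (hz : ∀ᶠ i in l, IsLUB (rqObjective Iw μ b (ρ i) (δ i) '' Ici 0) (z i)) :
    Tendsto (fun i => δ i * z i) l (𝓝 (cx2 * b ^ 2 / (4 * μ))) := by
  have hρ0 : ∀ᶠ i in l, 0 < ρ i := hρ.eventually (lt_mem_nhds one_pos)
  refine tendsto_order.2 ⟨fun a ha => ?_, fun a ha => ?_⟩
  · set L := cx2 * b ^ 2 / (4 * μ) with hL
    have hL0 : 0 < L := by positivity
    have hδ2 : Tendsto (fun i => (δ i ^ 2)⁻¹) l atTop := by
      apply Tendsto.inv_tendsto_nhdsGT_zero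
      refine tendsto_nhdsWithin_iff.2 ⟨by simpa using hδ.pow 2, ?_⟩
      filter_upwards [hδ0] with i hi
      exact pow_pos hi 2
    have harg : Tendsto (fun i => ρ i * μ * (L * (δ i ^ 2)⁻¹)) l atTop := by
      have : Tendsto (fun i => ρ i * μ) l (𝓝 (1 * μ)) := hρ.mul_const μ
      exact this.pos_mul_atTop (by positivity) (hδ2.const_mul_atTop hL0)
    have hlim : Tendsto (fun i => -L + b * √(ρ i * L *
        Iw (ρ i * μ * (L * (δ i ^ 2)⁻¹)) / μ)) l (𝓝 (-L + b * √(1 * L * cx2 / μ))) :=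
      ((((hρ.mul_const L).mul (hI.comp harg)).div_const μ).sqrt.const_mul b).const_add (-L)
    have hval : -L + b * √(1 * L * cx2 / μ) = L := by
      have : 1 * L * cx2 / μ = (cx2 * b / (2 * μ)) ^ 2 := by rw [hL]; field_simp; ring
      rw [this, Real.sqrt_sq (by positivity), hL]
      field_simp
      ring
    rw [hval] at hlim
    filter_upwards [hlim.eventually (lt_mem_nhds ha), hδ0, hz] with i hi hδi hzi
    refine hi.trans_le ?_
    have h := hzi.1 ⟨L * (δ i ^ 2)⁻¹, by simp only [mem_Ici]; positivity, rfl⟩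
    have h' := mul_le_mul_of_nonneg_left h hδi.le
    refine le_trans (le_of_eq ?_) h'
    unfold rqObjective
    have e : ρ i * (L * (δ i ^ 2)⁻¹) * Iw (ρ i * μ * (L * (δ i ^ 2)⁻¹)) / μ
        = (ρ i * L * Iw (ρ i * μ * (L * (δ i ^ 2)⁻¹)) / μ) / δ i ^ 2 := by
      ring
    rw [e, Real.sqrt_div' (_ / μ) (sq_nonneg (δ i)), Real.sqrt_sq hδi.le]
    field_simp
  · obtain ⟨B, hB, hBa⟩ : ∃ B, cx2 < B ∧ B * b ^ 2 / (4 * μ) < a := by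
      have h1 : Tendsto (fun B : ℝ => B * b ^ 2 / (4 * μ)) (𝓝[>] cx2)
          (𝓝 (cx2 * b ^ 2 / (4 * μ))) :=
        ((tendsto_id.mul_const _).div_const _).mono_left nhdsWithin_le_nhds
      obtain ⟨B, h, h'⟩ :=
        ((h1.eventually (gt_mem_nhds ha)).and self_mem_nhdsWithin).exists
      exact ⟨B, h', h⟩
    have hB0 : 0 < B := hcx2.trans hB
    have ha0 : 0 < a := lt_trans (by positivity) hBa
    obtain ⟨T, hT⟩ := eventually_atTop.1 (hI.eventually (gt_mem_nhds hB))
    have hlim1 : Tendsto (fun i => b ^ 2 * (ρ i * B / μ) / 4) l (𝓝 (b ^ 2 * (1 * B / μ) / 4)) :=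
      (((hρ.mul_const B).div_const μ).const_mul _).div_const 4
    have hlim2 : Tendsto (fun i => δ i * (b * √(T / μ * C / μ))) l (𝓝 (0 * _)) :=
      hδ.mul_const _
    have hlt : b ^ 2 * (1 * B / μ) / 4 < a := by
      refine lt_of_eq_of_lt ?_ hBa
      field_simp
    rw [zero_mul] at hlim2
    filter_upwards [hlim1.eventually (gt_mem_nhds hlt), hlim2.eventually (gt_mem_nhds ha0), hδ0,
      hρ0, hz] with i h1 h2 hδi hρi hzi
    have key : z i ≤ max (b ^ 2 * (ρ i * B / μ) / (4 * δ i)) (b * √(T / μ * C / μ)) := by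
      apply hzi.2
      rintro _ ⟨u, hu, rfl⟩
      have hu : 0 ≤ u := hu
      rcases le_total T (ρ i * μ * u) with h | h
      · exact le_max_of_le_left (rqObjective_le hμ hb hρi hδi hB0.le hu (hT _ h).le)
      · apply le_max_of_le_right
        have h3 : ρ i * u ≤ T / μ := by
          rw [le_div_iff₀ hμ]
          linarith
        have h4 := hC (ρ i * μ * u) (by positivity)
        have h5 : b * √(ρ i * u * Iw (ρ i * μ * u) / μ) ≤ b * √(T / μ * C / μ) := by
          have : ρ i * u * Iw (ρ i * μ * u) ≤ T / μ * C :=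
            (mul_le_mul_of_nonneg_left h4 (by positivity)).trans
              (mul_le_mul_of_nonneg_right h3 hC0)
          gcongr
        unfold rqObjective
        nlinarith
    refine (mul_le_mul_of_nonneg_left key hδi.le).trans_lt ?_
    rw [mul_max_of_nonneg _ _ hδi.le]
    refine max_lt (lt_of_eq_of_lt ?_ h1) h2
    field_simp

/-- A real number that is an extended-real supremum is a real least upper bound. -/
lemma isLUB_image_of_coe_eq_iSup {f : ℝ → ℝ} {s : Set ℝ} {z : ℝ}
    (h : (z : EReal) = ⨆ u : s, ((f u : ℝ) : EReal)) : IsLUB (f '' s) z := by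
  constructor
  · rintro _ ⟨u, hu, rfl⟩
    rw [← EReal.coe_le_coe_iff, h]
    exact le_iSup (fun u : s => ((f u : ℝ) : EReal)) ⟨u, hu⟩
  · intro m hm
    rw [← EReal.coe_le_coe_iff, h]
    exact iSup_le fun u => EReal.coe_le_coe_iff.2 (hm ⟨u, u.2, rfl⟩)

section Root

variable {k : ℕ} {a d L : ℝ}

lemma strictMonoOn_mul_pow_sub_div (hk : k ≠ 0) (ha : 0 < a) (hL : 0 < L) :
    StrictMonoOn (fun y : ℝ => a * y ^ k - d - L / y) (Ioi 0) := by
  intro x hx y hy hxy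
  have hx : 0 < x := hx
  have h1 : x ^ k < y ^ k := pow_lt_pow_left₀ hxy hx.le hk
  have h2 : L / y < L / x := by gcongr
  have h3 : a * x ^ k < a * y ^ k := by gcongr
  simp only
  linarith

lemma exists_pos_mul_pow_sub_eq (hk : k ≠ 0) (ha : 0 < a) (hL : 0 < L) :
    ∃ z : ℝ, 0 < z ∧ a * z ^ (k + 1) - d * z = L := by
  have htop : Tendsto (fun z : ℝ => z * (a * z ^ k - d)) atTop atTop :=
    tendsto_id.atTop_mul_atTop₀
      (tendsto_atTop_add_const_right _ (-d) ((tendsto_pow_atTop hk).const_mul_atTop ha))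
  obtain ⟨M, hM, hM0⟩ := ((htop.eventually_ge_atTop L).and (eventually_ge_atTop 0)).exists
  obtain ⟨z, hz, hzL⟩ := intermediate_value_Icc hM0
    (f := fun z : ℝ => z * (a * z ^ k - d)) (by fun_prop) (show L ∈ Icc _ _ from
      ⟨by simpa using hL.le, hM⟩)
  refine ⟨z, lt_of_le_of_ne hz.1 ?_, by rw [← hzL]; ring⟩
  rintro rfl
  simp only [zero_mul] at hzL
  exact hL.ne hzL

/-- Positive solutions of `g y ^ k - e = m / y` depend continuously on the coefficients. -/
lemma tendsto_of_mul_pow_sub_div_eq_zero {ι : Type*} {l : Filter ι} {g e m y : ι → ℝ} {z : ℝ}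
    (hk : k ≠ 0) (ha : 0 < a) (hL : 0 < L) (hz0 : 0 < z) (hz : a * z ^ k - d - L / z = 0)
    (hg : Tendsto g l (𝓝 a)) (he : Tendsto e l (𝓝 d)) (hm : Tendsto m l (𝓝 L))
    (hy0 : ∀ᶠ i in l, 0 < y i) (hy : ∀ᶠ i in l, g i * y i ^ k - e i - m i / y i = 0) :
    Tendsto y l (𝓝 z) := by
  have hlim : ∀ t, Tendsto (fun i => g i * t ^ k - e i - m i / t) l
      (𝓝 (a * t ^ k - d - L / t)) := fun t =>
    ((hg.mul_const _).sub he).sub (hm.div_const t)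
  have hgpos := hg.eventually (lt_mem_nhds ha)
  have hmpos := hm.eventually (lt_mem_nhds hL)
  refine tendsto_order.2 ⟨fun t ht => ?_, fun t ht => ?_⟩
  · rcases le_or_gt t 0 with h0 | h0
    · filter_upwards [hy0] with i hi using h0.trans_lt hi
    · have hneg : a * t ^ k - d - L / t < 0 := by
        rw [← hz]
        exact strictMonoOn_mul_pow_sub_div hk ha hL h0 hz0 ht
      filter_upwards [hy0, hy, hgpos, hmpos, (hlim t).eventually (gt_mem_nhds hneg)]
        with i h1 h2 h3 h4 h5
      rw [← h2] at h5
      exact (strictMonoOn_mul_pow_sub_div hk h3 h4).lt_iff_lt h0 h1 |>.1 h5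
  · have h0 : 0 < t := hz0.trans ht
    have hpos : 0 < a * t ^ k - d - L / t := by
      rw [← hz]
      exact strictMonoOn_mul_pow_sub_div hk ha hL hz0 h0 ht
    filter_upwards [hy0, hy, hgpos, hmpos, (hlim t).eventually (lt_mem_nhds hpos)]
      with i h1 h2 h3 h4 h5
    rw [← h2] at h5
    exact (strictMonoOn_mul_pow_sub_div hk h3 h4).lt_iff_lt h1 h0 |>.1 h5

end Root

lemma tendsto_rpow_sub_indicator {γ h : ℝ} (hγ : h ≤ γ) :
    Tendsto (fun α : ℝ => α ^ (γ - h)) (𝓝[>] 0) (𝓝 (if γ = h then 1 else 0)) := by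
  split_ifs with heq
  · simp [heq]
  · have hpos : 0 < γ - h := sub_pos.2 (lt_of_le_of_ne hγ (Ne.symm heq))
    have := (Real.continuousAt_rpow_const 0 (γ - h) (Or.inr hpos.le)).tendsto
    rw [Real.zero_rpow hpos.ne'] at this
    exact this.mono_left nhdsWithin_le_nhds

/-- heavy-traffic limit of the RQ fixed point in the critically loaded
regime (`γ ≥ h = k/(k+1)`).  With the same data as in the underloaded case,
there exists a finite constant `Ẑ > 0` such that `α^h Z(α) → Ẑ`, and `Ẑ` is the
unique positive root of
`-𝟙{γ = h} c Ẑ + (F^{(k)}(0)/k!) Ẑ^{k+1} = c_x² b² / (4 μ)`. -/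
theorem rq_heavy_traffic_critical
    (k : ℕ) (hk : 1 ≤ k)
    (F : ℝ → ℝ)
    (hF_mono : Monotone F)
    (hF_zero : ∀ x ≤ (0 : ℝ), F x = 0)
    (hF_range : ∀ x, 0 ≤ x → 0 ≤ F x ∧ F x < 1)
    (hF_lim : Tendsto F atTop (𝓝 1))
    (hF_smooth : ContDiffOn ℝ k F (Set.Ici 0))
    (hF_derivs : ∀ j < k, iteratedDerivWithin j F (Set.Ici 0) 0 = 0)
    (hF_k : 0 < iteratedDerivWithin k F (Set.Ici 0) 0)
    (Iw : ℝ → ℝ) (hIw_cont : Continuous Iw)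
    (hIw_nonneg : ∀ t, 0 ≤ t → 0 ≤ Iw t)
    (hIw_bdd : ∃ C : ℝ, ∀ t, 0 ≤ t → Iw t ≤ C)
    (cx2 : ℝ) (hcx2 : 0 < cx2)
    (hIw_lim : Tendsto Iw atTop (𝓝 cx2))
    (μ b γ c : ℝ) (hμ : 0 < μ) (hb : 0 < b) (hγ : 0 < γ)
    (hγh : (k : ℝ) / (k + 1) ≤ γ)
    (Z : ℝ → ℝ)
    (hZ : ∀ᶠ α in 𝓝[>] (0 : ℝ),
      0 ≤ Z α ∧
      (Z α : EReal) = ⨆ u : {u : ℝ // 0 ≤ u},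
        (((1 + c * α ^ γ) * (u : ℝ) - (u : ℝ) / (1 - F (α * Z α))
          + b * Real.sqrt ((1 + c * α ^ γ) * (u : ℝ)
              * Iw ((1 + c * α ^ γ) * μ * (u : ℝ)) / μ) : ℝ) : EReal)) :
    ∃ Zhat : ℝ, 0 < Zhat ∧
      Tendsto (fun α : ℝ => α ^ ((k : ℝ) / (k + 1)) * Z α)
        (𝓝[>] (0 : ℝ)) (𝓝 Zhat) ∧
      (-(if γ = (k : ℝ) / (k + 1) then (1 : ℝ) else 0) * c * Zhat
        + iteratedDerivWithin k F (Set.Ici 0) 0 / (Nat.factorial k) * Zhat ^ (k + 1)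
        = cx2 * b ^ 2 / (4 * μ)) ∧
      ∀ z : ℝ, 0 < z →
        (-(if γ = (k : ℝ) / (k + 1) then (1 : ℝ) else 0) * c * z
          + iteratedDerivWithin k F (Set.Ici 0) 0 / (Nat.factorial k) * z ^ (k + 1)
          = cx2 * b ^ 2 / (4 * μ)) → z = Zhat := by
  set a := iteratedDerivWithin k F (Set.Ici 0) 0 / (Nat.factorial k) with ha_def
  set h : ℝ := (k : ℝ) / (k + 1) with hh
  set L := cx2 * b ^ 2 / (4 * μ) with hL_def
  set ι : ℝ := if γ = h then 1 else 0 with hι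
  have hk0 : k ≠ 0 := by omega
  have ha : 0 < a := by positivity
  have hL : 0 < L := by positivity
  obtain ⟨C, hC⟩ := hIw_bdd
  have hC0 : 0 ≤ C := (hIw_nonneg 0 le_rfl).trans (hC 0 le_rfl)
  have hpow : Tendsto (fun x => F x / x ^ k) (𝓝[>] 0) (𝓝 a) :=
    tendsto_div_pow_of_iteratedDerivWithin_eq_zero hF_smooth hF_derivs
  have hFpos : ∀ x, 0 < x → 0 < F x := by
    intro x hx
    obtain ⟨y, ⟨hy, hyx⟩, hy0⟩ := ((hpow.eventually (lt_mem_nhds ha)).and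
      ((nhdsWithin_le_nhds (gt_mem_nhds hx) : ∀ᶠ y in 𝓝[>] (0 : ℝ), y < x))).and
        self_mem_nhdsWithin |>.exists
    have hy0 : 0 < y := hy0
    exact ((div_pos_iff_of_pos_right (pow_pos hy0 k)).1 hy).trans_le (hF_mono hyx.le)
  have hα : Tendsto (fun α : ℝ => α) (𝓝[>] 0) (𝓝 0) := nhdsWithin_le_nhds
  have hα0 : ∀ᶠ α : ℝ in 𝓝[>] 0, 0 < α := self_mem_nhdsWithin
  have hcα : Tendsto (fun α : ℝ => c * α ^ γ) (𝓝[>] 0) (𝓝 0) := by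
    have := (hα.rpow_const (Or.inr hγ.le)).const_mul c
    rwa [Real.zero_rpow hγ.ne', mul_zero] at this
  set ρ : ℝ → ℝ := fun α => 1 + c * α ^ γ with hρ_def
  have hρ : Tendsto ρ (𝓝[>] 0) (𝓝 1) := by simpa using hcα.const_add 1
  have hρ0 : ∀ᶠ α in 𝓝[>] 0, 0 < ρ α := hρ.eventually (lt_mem_nhds one_pos)
  set δ : ℝ → ℝ := fun α => 1 / (1 - F (α * Z α)) - ρ α with hδ_def
  have hlub : ∀ᶠ α in 𝓝[>] 0, IsLUB (rqObjective Iw μ b (ρ α) (δ α) '' Ici 0) (Z α) := by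
    filter_upwards [hZ] with α hα
    apply isLUB_image_of_coe_eq_iSup
    rw [hα.2]
    congr 1 with u
    congr 1
    simp only [rqObjective, hδ_def, hρ_def]
    ring
  have hZ0 : ∀ᶠ α in 𝓝[>] 0, 0 ≤ Z α := hZ.mono fun _ h => h.1
  have hδ0 : ∀ᶠ α in 𝓝[>] 0, 0 < δ α := by
    filter_upwards [hlub, hρ0] with α h1 h2
    exact drift_pos_of_isLUB_rqObjective hcx2 hIw_lim hμ hb h2 h1
  -- The scaled argument `α Z(α)` vanishes: otherwise the drift stays away from zero.
  have hαZ : Tendsto (fun α => α * Z α) (𝓝[>] 0) (𝓝 0) := by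
    refine tendsto_order.2 ⟨fun t ht => ?_, fun ε hε => ?_⟩
    · filter_upwards [hZ0, hα0] with α h1 h2
      exact ht.trans_le (mul_nonneg h2.le h1)
    · have hη := hFpos ε hε
      have hbound : Tendsto (fun α => α * (b ^ 2 * (ρ α * C / μ) / 4)) (𝓝[>] 0)
          (𝓝 (0 * (b ^ 2 * (1 * C / μ) / 4))) :=
        hα.mul ((((hρ.mul_const C).div_const μ).const_mul _).div_const 4)
      rw [zero_mul] at hbound
      have hlt : 0 < F ε / 2 * ε := by positivity
      filter_upwards [hbound.eventually (gt_mem_nhds hlt), hlub, hδ0, hρ0, hα0,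
        hcα.eventually (gt_mem_nhds (half_pos hη))] with α h1 h2 h3 h4 h5 h6
      by_contra! hge
      have hx : 0 ≤ α * Z α := hε.le.trans hge
      have hFε : F ε ≤ F (α * Z α) := hF_mono hge
      obtain ⟨hr0, hr1⟩ := hF_range _ hx
      have hinv : 1 + F (α * Z α) ≤ 1 / (1 - F (α * Z α)) := by
        rw [le_div_iff₀ (by linarith)]
        nlinarith
      have hδα : F ε / 2 ≤ δ α := by
        simp only [hδ_def, hρ_def]
        linarith
      have h7 := mul_le_of_isLUB_rqObjective hμ hb h4 h3 hC0 hC h2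
      have h8 := mul_le_mul_of_nonneg_left h7 h5.le
      have h9 : F ε / 2 * ε ≤ δ α * (α * Z α) := mul_le_mul hδα hge hε.le h3.le
      linarith
  have hFcont : Tendsto (fun α => F (α * Z α)) (𝓝[>] 0) (𝓝 0) := by
    have h1 : ContinuousWithinAt F (Ici 0) 0 := hF_smooth.continuousOn 0 self_mem_Ici
    have h2 : Tendsto F (𝓝[≥] 0) (𝓝 0) := by
      simpa [ContinuousWithinAt, hF_zero 0 le_rfl] using h1
    refine h2.comp (tendsto_nhdsWithin_iff.2 ⟨hαZ, ?_⟩)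
    filter_upwards [hZ0, hα0] with α h1 h2 using mul_nonneg h2.le h1
  have hsub : Tendsto (fun α => 1 - F (α * Z α)) (𝓝[>] 0) (𝓝 1) := by
    simpa using hFcont.const_sub 1
  have hδ : Tendsto δ (𝓝[>] 0) (𝓝 0) := by
    simpa [hδ_def] using ((tendsto_const_nhds (x := (1 : ℝ))).div hsub one_ne_zero).sub hρ
  have hδZ : Tendsto (fun α => δ α * Z α) (𝓝[>] 0) (𝓝 L) :=
    tendsto_mul_of_isLUB_rqObjective hμ hb hcx2 hC hC0 hIw_lim hρ hδ hδ0 hlub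
  have hZpos : ∀ᶠ α in 𝓝[>] 0, 0 < Z α := by
    filter_upwards [hδZ.eventually (lt_mem_nhds hL), hδ0] with α h1 h2
    exact (pos_iff_pos_of_mul_pos h1).1 h2
  have hg : Tendsto (fun α => F (α * Z α) / (α * Z α) ^ k / (1 - F (α * Z α)))
      (𝓝[>] 0) (𝓝 a) := by
    have h1 : Tendsto (fun α => α * Z α) (𝓝[>] 0) (𝓝[>] 0) := by
      refine tendsto_nhdsWithin_iff.2 ⟨hαZ, ?_⟩
      filter_upwards [hZpos, hα0] with α h1 h2 using mul_pos h2 h1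
    have h2 := (hpow.comp h1).div hsub one_ne_zero
    rwa [div_one] at h2
  have he : Tendsto (fun α : ℝ => α ^ (γ - h) * c) (𝓝[>] 0) (𝓝 (ι * c)) :=
    (tendsto_rpow_sub_indicator hγh).mul_const c
  obtain ⟨z, hz0, hz⟩ := exists_pos_mul_pow_sub_eq (d := ι * c) hk0 ha hL
  have hroot : ∀ y : ℝ, 0 < y → (a * y ^ (k + 1) - ι * c * y = L ↔
      a * y ^ k - ι * c - L / y = 0) := by
    intro y hy
    rw [sub_eq_zero, eq_div_iff hy.ne', sub_mul, pow_succ, mul_assoc a]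
  refine ⟨z, hz0, ?_, by linarith, fun y hy hyL => ?_⟩
  · refine tendsto_of_mul_pow_sub_div_eq_zero hk0 ha hL hz0 ((hroot z hz0).1 hz) hg he hδZ ?_ ?_
    · filter_upwards [hZpos, hα0] with α h1 h2
      positivity
    · filter_upwards [hZpos, hα0, hsub.eventually (lt_mem_nhds one_pos)] with α h1 h2 h3
      have hαh : 0 < α ^ h := Real.rpow_pos_of_pos h2 h
      have hpowh : (α ^ h) ^ k * α ^ h = α ^ k := by
        rw [← pow_succ, ← Real.rpow_natCast, ← Real.rpow_mul h2.le, hh, ← Real.rpow_natCast α k]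
        congr 1
        push_cast
        field_simp
      have hγ' : α ^ γ = α ^ (γ - h) * α ^ h := by
        rw [← Real.rpow_add h2, sub_add_cancel]
      have hδα : δ α = F (α * Z α) / (1 - F (α * Z α)) - c * α ^ γ := by
        simp only [hδ_def, hρ_def]
        field_simp
        ring
      rw [hδα, hγ', mul_pow, mul_pow, ← hpowh]
      field_simp
      ring
  · refine (strictMonoOn_mul_pow_sub_div (d := ι * c) hk0 ha hL).injOn hy hz0 ?_
    rw [(hroot y hy).1 (by linarith), (hroot z hz0).1 hz]
end

section
/- Fix T > 0, β > 0 and an integer k ≥ 1, and set g(x) = −β·x^k for x ≥ 0. Let y₁, y₂ : [0,T] → ℝ be continuous with y₁(0) ≥ 0 and y₂(0) ≥ 0, and let (x₁, ℓ₁) and (x₂, ℓ₂) be the corresponding solutions of the reflected integral equation xᵢ(t) = yᵢ(t) + ∫_0^t g(xᵢ(s)) ds + ℓᵢ(t) with xᵢ ≥ 0, ℓᵢ nondecreasing, ℓᵢ(0) = 0, and ℓᵢ constant on every closed subinterval on which xᵢ is strictly positive. If R > 0 satisfies sup_{0 ≤ t ≤ T} x₁(t) ≤ R and sup_{0 ≤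 t ≤ T} x₂(t) ≤ R, and L = β·k·R^{k−1}, then sup_{0 ≤ t ≤ T} |x₁(t) − x₂(t)| ≤ 2·e^{2LT}·sup_{0 ≤ t ≤ T} |y₁(t) − y₂(t)|. -/
open Filter Set Topology MeasureTheory

/-- `(x, ℓ)` solves the reflected (Skorokhod) integral equation on `[0,T]` with input
`y` and polynomial drift `g(x) = -β x^k`. -/
def IsReflectedSolution (T β : ℝ) (k : ℕ) (y x ℓ : ℝ → ℝ) : Prop :=
  ContinuousOn x (Set.Icc 0 T) ∧
  ContinuousOn ℓ (Set.Icc 0 T) ∧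
  (∀ t ∈ Set.Icc (0 : ℝ) T,
    x t = y t + (∫ s in (0 : ℝ)..t, -β * (x s) ^ k) + ℓ t) ∧
  (∀ t ∈ Set.Icc (0 : ℝ) T, 0 ≤ x t) ∧
  MonotoneOn ℓ (Set.Icc 0 T) ∧
  ℓ 0 = 0 ∧
  (∀ s t : ℝ, 0 ≤ s → s ≤ t → t ≤ T →
    (∀ r ∈ Set.Icc s t, 0 < x r) → ℓ t = ℓ s)

namespace IsReflectedSolution

variable {T β : ℝ} {k : ℕ} {y x ℓ : ℝ → ℝ}

lemma intervalIntegrable_drift (h : IsReflectedSolution T β k y x ℓ) {s t : ℝ}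
    (hs : 0 ≤ s) (hst : s ≤ t) (ht : t ≤ T) :
    IntervalIntegrable (fun r => -β * x r ^ k) volume s t := by
  refine ContinuousOn.intervalIntegrable ?_
  rw [uIcc_of_le hst]
  exact continuousOn_const.mul ((h.1.mono (Icc_subset_Icc hs ht)).pow k)

lemma sub_eq (h : IsReflectedSolution T β k y x ℓ) {s t : ℝ}
    (hs : 0 ≤ s) (hst : s ≤ t) (ht : t ≤ T) :
    x t - x s = y t - y s + (∫ r in s..t, -β * x r ^ k) + (ℓ t - ℓ s) := by
  have hxs := h.2.2.1 s ⟨hs, hst.trans ht⟩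
  have hxt := h.2.2.1 t ⟨hs.trans hst, ht⟩
  have hadd := intervalIntegral.integral_add_adjacent_intervals
    (h.intervalIntegrable_drift le_rfl hs (hst.trans ht)) (h.intervalIntegrable_drift hs hst ht)
  linarith

/-- The regulator is constant on a closed interval if the solution is positive there except
possibly at the left endpoint. -/
lemma regulator_eq_of_pos_Ioc (h : IsReflectedSolution T β k y x ℓ) {s t : ℝ}
    (hs : 0 ≤ s) (hst : s < t) (ht : t ≤ T) (hpos : ∀ r ∈ Ioc s t, 0 < x r) :
    ℓ t = ℓ s := by
  have hcont : Tendsto ℓ (𝓝[Ioc s t] s) (𝓝 (ℓ s)) :=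
    (h.2.1 s ⟨hs, hst.le.trans ht⟩).mono fun r hr => ⟨hs.trans hr.1.le, hr.2.trans ht⟩
  rw [nhdsWithin_Ioc_eq_nhdsGT hst] at hcont
  refine tendsto_nhds_unique (tendsto_const_nhds.congr' ?_) hcont
  filter_upwards [Ioc_mem_nhdsGT hst] with r hr
  exact h.2.2.2.2.2.2 r t (hs.trans hr.1.le) hr.2 ht fun q hq => hpos q ⟨hr.1.trans_le hq.1, hq.2⟩

variable {y₁ y₂ x₁ x₂ ℓ₁ ℓ₂ : ℝ → ℝ}

/-- While the first solution stays above the second, the gap between them grows at most as fast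
as the gap between the inputs: the drift is nonincreasing and the first regulator is idle. -/
lemma gap_increment_le (hβ : 0 ≤ β) (h₁ : IsReflectedSolution T β k y₁ x₁ ℓ₁)
    (h₂ : IsReflectedSolution T β k y₂ x₂ ℓ₂) {s t : ℝ} (hs : 0 ≤ s) (hst : s < t) (ht : t ≤ T)
    (hlt : ∀ r ∈ Ioc s t, x₂ r < x₁ r) :
    (x₁ t - x₂ t) - (x₁ s - x₂ s) ≤ (y₁ t - y₂ t) - (y₁ s - y₂ s) := by
  have hnonneg : ∀ r ∈ Ioc s t, 0 ≤ x₂ r := fun r hr =>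
    h₂.2.2.2.1 r ⟨hs.trans hr.1.le, hr.2.trans ht⟩
  have hℓ₁ : ℓ₁ t = ℓ₁ s :=
    h₁.regulator_eq_of_pos_Ioc hs hst ht fun r hr => (hnonneg r hr).trans_lt (hlt r hr)
  have hℓ₂ : ℓ₂ s ≤ ℓ₂ t :=
    h₂.2.2.2.2.1 ⟨hs, hst.le.trans ht⟩ ⟨hs.trans hst.le, ht⟩ hst.le
  have hdrift : (∫ r in s..t, -β * x₁ r ^ k) ≤ ∫ r in s..t, -β * x₂ r ^ k := by
    refine intervalIntegral.integral_mono_on_of_le_Ioo hst.le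
      (h₁.intervalIntegrable_drift hs hst.le ht) (h₂.intervalIntegrable_drift hs hst.le ht) ?_
    intro r hr
    have hr' := Ioo_subset_Ioc_self hr
    exact mul_le_mul_of_nonpos_left
      (pow_le_pow_left₀ (hnonneg r hr') (hlt r hr').le k) (neg_nonpos.mpr hβ)
  linarith [h₁.sub_eq hs hst.le ht, h₂.sub_eq hs hst.le ht]

lemma apply_zero (h : IsReflectedSolution T β k y x ℓ) (hT : 0 ≤ T) : x 0 = y 0 := by
  simpa [h.2.2.2.2.2.1] using h.2.2.1 0 ⟨le_rfl, hT⟩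

/-- Since the drift is nonincreasing, the solution map is Lipschitz with constant `2`
(one-sided form). -/
lemma sub_le_two_mul (hβ : 0 ≤ β) (h₁ : IsReflectedSolution T β k y₁ x₁ ℓ₁)
    (h₂ : IsReflectedSolution T β k y₂ x₂ ℓ₂) {M : ℝ}
    (hM : ∀ s ∈ Icc 0 T, |y₁ s - y₂ s| ≤ M) {t : ℝ} (ht : t ∈ Icc 0 T) :
    x₁ t - x₂ t ≤ 2 * M := by
  have hM0 : 0 ≤ M := (abs_nonneg _).trans (hM t ht)
  have hMt := (abs_le.mp (hM t ht)).2
  rcases le_or_gt (x₁ t) (x₂ t) with hle | hgt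
  · linarith
  have hsub : Icc 0 t ⊆ Icc 0 T := Icc_subset_Icc_right ht.2
  rcases (Icc 0 t ∩ {r | x₁ r ≤ x₂ r}).eq_empty_or_nonempty with hempty | hne
  · have hlt : ∀ r ∈ Icc 0 t, x₂ r < x₁ r := fun r hr =>
      not_le.mp fun hr' => hempty.subset ⟨hr, hr'⟩
    have hT := ht.1.trans ht.2
    have hx₁ := h₁.apply_zero hT
    have hx₂ := h₂.apply_zero hT
    rcases ht.1.eq_or_lt with rfl | hpos
    · linarith
    · linarith [gap_increment_le hβ h₁ h₂ le_rfl hpos ht.2 fun r hr => hlt r ⟨hr.1.le, hr.2⟩]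
  · have hcompact : IsCompact (Icc 0 t ∩ {r | x₁ r ≤ x₂ r}) :=
      isCompact_Icc.of_isClosed_subset
        (isClosed_Icc.isClosed_le (h₁.1.mono hsub) (h₂.1.mono hsub)) inter_subset_left
    obtain ⟨s, ⟨hs, hxs⟩, hmax⟩ := hcompact.exists_isGreatest hne
    have hxs' : x₁ s ≤ x₂ s := hxs
    have hst : s < t := hs.2.lt_of_ne fun h => hgt.not_ge (h ▸ hxs')
    have hgap := gap_increment_le hβ h₁ h₂ hs.1 hst ht.2 fun r hr =>
      not_le.mp fun hr' => hr.1.not_ge (hmax ⟨⟨hs.1.trans hr.1.le, hr.2⟩, hr'⟩)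
    linarith [(abs_le.mp (hM s (hsub hs))).1]

end IsReflectedSolution

/-- Lipschitz continuity of the solution map of the reflected integral
equation with polynomial drift `g(x) = -β x^k`: if both solutions are bounded by `R`
on `[0,T]` and `L = β k R^{k-1}`, then
`sup_{[0,T]} |x₁ - x₂| ≤ 2 e^{2LT} sup_{[0,T]} |y₁ - y₂|`. -/
theorem reflected_integral_equation_lipschitz
    (T β : ℝ) (k : ℕ) (hT : 0 < T) (hβ : 0 < β) (hk : 1 ≤ k)
    (y₁ y₂ x₁ ℓ₁ x₂ ℓ₂ : ℝ → ℝ)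
    (hy₁ : ContinuousOn y₁ (Set.Icc 0 T)) (hy₂ : ContinuousOn y₂ (Set.Icc 0 T))
    (hy₁0 : 0 ≤ y₁ 0) (hy₂0 : 0 ≤ y₂ 0)
    (h₁ : IsReflectedSolution T β k y₁ x₁ ℓ₁)
    (h₂ : IsReflectedSolution T β k y₂ x₂ ℓ₂)
    (R : ℝ) (hR : 0 < R)
    (hbd₁ : ∀ t ∈ Set.Icc (0 : ℝ) T, x₁ t ≤ R)
    (hbd₂ : ∀ t ∈ Set.Icc (0 : ℝ) T, x₂ t ≤ R)
    (L : ℝ) (hL : L = β * k * R ^ (k - 1)) :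
    ∀ t ∈ Set.Icc (0 : ℝ) T,
      |x₁ t - x₂ t| ≤ 2 * Real.exp (2 * L * T) *
        sSup ((fun s : ℝ => |y₁ s - y₂ s|) '' Set.Icc 0 T) := by
  have hM : ∀ s ∈ Icc 0 T, |y₁ s - y₂ s| ≤ sSup ((fun s : ℝ => |y₁ s - y₂ s|) '' Icc 0 T) :=
    fun s hs => le_csSup (isCompact_Icc.bddAbove_image (hy₁.sub hy₂).abs) (mem_image_of_mem _ hs)
  intro t ht
  have hM0 := (abs_nonneg _).trans (hM t ht)
  have hexp : 1 ≤ Real.exp (2 * L * T) := by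
    rw [Real.one_le_exp_iff, hL]
    positivity
  have h₁₂ := h₁.sub_le_two_mul hβ.le h₂ hM ht
  have h₂₁ := h₂.sub_le_two_mul hβ.le h₁ (fun s hs => abs_sub_comm (y₁ s) (y₂ s) ▸ hM s hs) ht
  calc |x₁ t - x₂ t| ≤ 2 * sSup ((fun s : ℝ => |y₁ s - y₂ s|) '' Icc 0 T) :=
        abs_le.mpr ⟨by linarith, h₁₂⟩
    _ ≤ _ := by
        gcongr
        linarith
end

section
/- Suppose c < 0 and 0 < γ < h. Then lim_{α↓0} μ·(1 − ρ(α))·J(α) = 1 and lim_{α↓0} μ²·(1 − ρ(α))²·J₁(α) = 1, where 1 − ρ(α) = (−c)·α^γ. -/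
open Filter Set Topology MeasureTheory

/-- `J(α) = ∫_0^∞ exp{λ(α) ∫_0^x F̄(α u) du - μ x} dx` for the `M/M/1+GI` queue
with `ρ(α) = 1 + c α^γ`, `λ(α) = ρ(α) μ`, patience CDF `x ↦ F(α x)`. -/
noncomputable def Jq (F : ℝ → ℝ) (μ c γ α : ℝ) : ℝ :=
  ∫ x in Set.Ioi (0 : ℝ),
    Real.exp ((1 + c * α ^ γ) * μ * (∫ u in (0 : ℝ)..x, (1 - F (α * u))) - μ * x)

/-- `J₁(α) = ∫_0^∞ x exp{λ(α) ∫_0^x F̄(α u) du - μ x} dx`. -/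
noncomputable def J1q (F : ℝ → ℝ) (μ c γ α : ℝ) : ℝ :=
  ∫ x in Set.Ioi (0 : ℝ),
    x * Real.exp ((1 + c * α ^ γ) * μ * (∫ u in (0 : ℝ)..x, (1 - F (α * u))) - μ * x)

/-- A function whose first `k` derivatives vanish at `0` is `O(x ^ k)` there. -/
theorem isBigO_pow_of_iteratedDerivWithin_eq_zero {f : ℝ → ℝ} {k : ℕ}
    (hf : ContDiffOn ℝ k f (Ici 0))
    (h0 : ∀ j < k, iteratedDerivWithin j f (Ici 0) 0 = 0) :
    f =O[𝓝[≥] 0] fun x => x ^ k := by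
  have ht := taylor_isLittleO (convex_Ici (0 : ℝ)) (mem_Ici.2 le_rfl) hf
  have hsum : ∀ x, taylorWithinEval f k (Ici 0) 0 x =
      ((k.factorial : ℝ)⁻¹ * x ^ k) * iteratedDerivWithin k f (Ici 0) 0 := by
    intro x
    rw [taylor_within_apply, Finset.sum_range_succ, Finset.sum_eq_zero]
    · simp
    · intro j hj
      simp [h0 j (Finset.mem_range.1 hj)]
  have h1 : (fun x => taylorWithinEval f k (Ici 0) 0 x) =O[𝓝[≥] 0] fun x : ℝ => x ^ k := by
    simp only [hsum]
    refine (Asymptotics.isBigO_const_mul_self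
      ((k.factorial : ℝ)⁻¹ * iteratedDerivWithin k f (Ici 0) 0) (fun x : ℝ => x ^ k) _).congr_left ?_
    intro x
    ring
  simp only [sub_zero] at ht
  exact (ht.isBigO.add h1).congr_left fun x => by ring

/-- If `F x = O(x ^ k)` at `0⁺`, then `s * α ^ (-γ) * F (s * α ^ (1 - γ)) → 0` as `α ↓ 0`
whenever `γ < k / (k + 1)`. -/
theorem tendsto_div_rpow_mul_comp_of_isBigO_pow {F : ℝ → ℝ} {k : ℕ} {γ s : ℝ}
    (hF : F =O[𝓝[≥] 0] fun x => x ^ k) (hγh : γ < (k : ℝ) / (k + 1)) (hs : 0 < s) :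
    Tendsto (fun α : ℝ => s / α ^ γ * F (α * (s / α ^ γ))) (𝓝[>] 0) (𝓝 0) := by
  have hk1 : (0 : ℝ) < k + 1 := by positivity
  have hγ1 : γ < 1 := hγh.trans (by rw [div_lt_one hk1]; linarith)
  have hexp : 0 < k - γ * (k + 1) := by
    rw [lt_div_iff₀ hk1] at hγh
    linarith
  have hpow : ∀ {p : ℝ}, 0 < p → Tendsto (fun α : ℝ => α ^ p) (𝓝[>] 0) (𝓝 0) := by
    intro p hp
    have := (Real.continuousAt_rpow_const 0 p (Or.inr hp.le)).tendsto
    rw [Real.zero_rpow hp.ne'] at this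
    exact this.mono_left nhdsWithin_le_nhds
  have harg : Tendsto (fun α : ℝ => α * (s / α ^ γ)) (𝓝[>] 0) (𝓝[≥] 0) := by
    refine tendsto_nhdsWithin_iff.2 ⟨?_, ?_⟩
    · have := (hpow (sub_pos.2 hγ1)).const_mul s
      rw [mul_zero] at this
      refine this.congr' ?_
      filter_upwards [self_mem_nhdsWithin] with α hα
      rw [Real.rpow_sub hα, Real.rpow_one]
      ring
    · filter_upwards [self_mem_nhdsWithin] with α hα
      have hα : 0 < α := hα
      exact mem_Ici.2 (by positivity)
  have hO := (Asymptotics.isBigO_refl (fun α : ℝ => s / α ^ γ) (𝓝[>] 0)).mul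
    (hF.comp_tendsto harg)
  refine hO.trans_tendsto ?_
  have := (hpow hexp).const_mul (s ^ (k + 1))
  rw [mul_zero] at this
  refine this.congr' ?_
  filter_upwards [self_mem_nhdsWithin] with α hα
  have hα : 0 < α := hα
  have hne : (α ^ γ) ≠ 0 := (Real.rpow_pos_of_pos hα γ).ne'
  have hcast : (α ^ γ) ^ (k + 1) = α ^ (γ * (k + 1)) := by
    rw [← Real.rpow_natCast, ← Real.rpow_mul hα.le]
    push_cast
    rfl
  rw [Real.rpow_sub hα, Real.rpow_natCast, ← hcast]
  simp only [Function.comp_apply, mul_pow, div_pow]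
  field_simp
  ring

/-- The integrated tail `∫₀ˣ (1 - F (α u)) du` of a nonnegative monotone `F` lies between
`x (1 - F (α x))` and `x`. -/
theorem integral_one_sub_comp_mul_mem_Icc {F : ℝ → ℝ} (hF_mono : Monotone F)
    (hF_nonneg : ∀ x, 0 ≤ F x) {α x : ℝ} (hα : 0 ≤ α) (hx : 0 ≤ x) :
    (∫ u in (0 : ℝ)..x, (1 - F (α * u))) ∈ Icc (x * (1 - F (α * x))) x := by
  have hanti : Antitone fun u : ℝ => 1 - F (α * u) := fun a b hab =>
    sub_le_sub_left (hF_mono (mul_le_mul_of_nonneg_left hab hα)) 1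
  constructor
  · have := intervalIntegral.integral_mono_on hx (intervalIntegrable_const (c := 1 - F (α * x)))
      (hanti.intervalIntegrable (μ := volume)) fun u hu => hanti hu.2
    rwa [intervalIntegral.integral_const, sub_zero, smul_eq_mul] at this
  · have := intervalIntegral.integral_mono_on hx (hanti.intervalIntegrable (μ := volume))
      (intervalIntegrable_const (c := (1 : ℝ))) fun u _ => sub_le_self 1 (hF_nonneg _)
    simpa using this

/-- After rescaling by `φ = μ (1 - ρ(α))`, the weighted integrals converge to the corresponding
integrals against `exp (-y)`. -/
theorem tendsto_integral_weight_mul_exp_rescaled {F : ℝ → ℝ} {k : ℕ} {μ γ c : ℝ} {w : ℝ → ℝ}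
    (hF_mono : Monotone F) (hF_nonneg : ∀ x, 0 ≤ F x)
    (hF : F =O[𝓝[≥] 0] fun x => x ^ k) (hμ : 0 < μ) (hγ : 0 < γ)
    (hc : c < 0) (hγh : γ < (k : ℝ) / (k + 1))
    (hw : Continuous w) (hw_int : IntegrableOn (fun y => w y * Real.exp (-y)) (Ioi 0)) :
    Tendsto (fun α : ℝ => ∫ y in Ioi (0 : ℝ), w y *
      Real.exp ((1 + c * α ^ γ) * μ *
        (∫ u in (0 : ℝ)..((μ * (-c * α ^ γ))⁻¹ * y), (1 - F (α * u)))
          - μ * ((μ * (-c * α ^ γ))⁻¹ * y)))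
      (𝓝[>] 0) (𝓝 (∫ y in Ioi (0 : ℝ), w y * Real.exp (-y))) := by
  have hrpow : Tendsto (fun α : ℝ => α ^ γ) (𝓝[>] 0) (𝓝 0) := by
    have := (Real.continuousAt_rpow_const 0 γ (Or.inr hγ.le)).tendsto
    rw [Real.zero_rpow hγ.ne'] at this
    exact this.mono_left nhdsWithin_le_nhds
  have hrho : Tendsto (fun α : ℝ => 1 + c * α ^ γ) (𝓝[>] 0) (𝓝 1) := by
    simpa using (hrpow.const_mul c).const_add 1
  have hrho_pos : ∀ᶠ α : ℝ in 𝓝[>] 0, 0 < 1 + c * α ^ γ := hrho.eventually_const_lt one_pos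
  have hbounds : ∀ α : ℝ, 0 < α → 0 < 1 + c * α ^ γ → ∀ y : ℝ, 0 < y →
      (1 + c * α ^ γ) * μ * (∫ u in (0 : ℝ)..((μ * (-c * α ^ γ))⁻¹ * y), (1 - F (α * u)))
          - μ * ((μ * (-c * α ^ γ))⁻¹ * y) ∈
        Icc (-y - (1 + c * α ^ γ) * μ * (y / (μ * -c) / α ^ γ * F (α * (y / (μ * -c) / α ^ γ))))
          (-y) := by
    intro α hα hρ y hy
    have hr : 0 < α ^ γ := Real.rpow_pos_of_pos hα γ
    have hc' : 0 < -c := neg_pos.2 hc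
    have hx : (μ * (-c * α ^ γ))⁻¹ * y = y / (μ * -c) / α ^ γ := by
      field_simp
    rw [hx]
    set x := y / (μ * -c) / α ^ γ with hxdef
    have hx0 : 0 < x := by positivity
    have hy' : y = μ * (-c * α ^ γ) * x := by
      rw [hxdef]
      have := hc.ne
      field_simp
    obtain ⟨hl, hu⟩ := integral_one_sub_comp_mul_mem_Icc hF_mono hF_nonneg hα.le hx0.le
    have hρμ : 0 ≤ (1 + c * α ^ γ) * μ := by positivity
    have hl' := mul_le_mul_of_nonneg_left hl hρμ
    have hu' := mul_le_mul_of_nonneg_left hu hρμ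
    clear_value x
    subst hy'
    constructor
    · refine le_trans (le_of_eq ?_) (sub_le_sub_right hl' _)
      ring
    · refine (sub_le_sub_right hu' _).trans (le_of_eq ?_)
      ring
  refine tendsto_integral_filter_of_dominated_convergence
    (fun y => ‖w y * Real.exp (-y)‖) ?_ ?_ hw_int.norm ?_
  · filter_upwards [self_mem_nhdsWithin] with α hα
    have hα : 0 < α := hα
    have hanti : Antitone fun u : ℝ => 1 - F (α * u) := fun a b hab =>
      sub_le_sub_left (hF_mono (mul_le_mul_of_nonneg_left hab hα.le)) 1
    have hcont := intervalIntegral.continuous_primitive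
      (fun a b => hanti.intervalIntegrable (μ := volume) (a := a) (b := b)) 0
    have hcont' := hcont.comp (continuous_const_mul (μ * (-c * α ^ γ))⁻¹)
    refine Continuous.aestronglyMeasurable ?_
    refine hw.mul (Real.continuous_exp.comp ?_)
    exact (hcont'.const_mul _).sub (by fun_prop)
  · filter_upwards [self_mem_nhdsWithin, hrho_pos] with α hα hρ
    refine (ae_restrict_iff' measurableSet_Ioi).2 (.of_forall fun y hy => ?_)
    rw [norm_mul, norm_mul, Real.norm_eq_abs (Real.exp _), Real.norm_eq_abs (Real.exp _),
      Real.abs_exp, Real.abs_exp]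
    gcongr
    exact (hbounds α hα hρ y hy).2
  · refine (ae_restrict_iff' measurableSet_Ioi).2 (.of_forall fun y hy => ?_)
    have hy : 0 < y := hy
    have hs : 0 < y / (μ * -c) := by
      have := neg_pos.2 hc
      positivity
    refine Tendsto.const_mul _ ((Real.continuous_exp.tendsto _).comp ?_)
    have hlow : Tendsto (fun α : ℝ => -y - (1 + c * α ^ γ) * μ *
        (y / (μ * -c) / α ^ γ * F (α * (y / (μ * -c) / α ^ γ)))) (𝓝[>] 0) (𝓝 (-y)) := by
      simpa using ((hrho.mul_const μ).mul
        (tendsto_div_rpow_mul_comp_of_isBigO_pow hF hγh hs)).const_sub (-y)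
    refine tendsto_of_tendsto_of_tendsto_of_le_of_le' hlow tendsto_const_nhds ?_ ?_
    · filter_upwards [self_mem_nhdsWithin, hrho_pos] with α hα hρ
      exact (hbounds α hα hρ y hy).1
    · filter_upwards [self_mem_nhdsWithin, hrho_pos] with α hα hρ
      exact (hbounds α hα hρ y hy).2

/-- in the underloaded regime (`c < 0`, `0 < γ < h = k/(k+1)`),
`μ (1 - ρ(α)) J(α) → 1` and `μ² (1 - ρ(α))² J₁(α) → 1` as `α ↓ 0`,
where `1 - ρ(α) = (-c) α^γ`. -/
theorem mm1gi_J_limits_underloaded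
    (k : ℕ) (hk : 1 ≤ k)
    (F : ℝ → ℝ)
    (hF_mono : Monotone F)
    (hF_zero : ∀ x ≤ (0 : ℝ), F x = 0)
    (hF_range : ∀ x, 0 ≤ x → 0 ≤ F x ∧ F x < 1)
    (hF_lim : Tendsto F atTop (𝓝 1))
    (hF_smooth : ContDiffOn ℝ k F (Set.Ici 0))
    (hF_derivs : ∀ j < k, iteratedDerivWithin j F (Set.Ici 0) 0 = 0)
    (hF_k : 0 < iteratedDerivWithin k F (Set.Ici 0) 0)
    (μ γ c : ℝ) (hμ : 0 < μ) (hγ : 0 < γ)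
    (hc : c < 0) (hγh : γ < (k : ℝ) / (k + 1))
    (hJ : ∀ᶠ α in 𝓝[>] (0 : ℝ), IntegrableOn
      (fun x : ℝ => Real.exp ((1 + c * α ^ γ) * μ *
        (∫ u in (0 : ℝ)..x, (1 - F (α * u))) - μ * x)) (Set.Ioi 0))
    (hJ1 : ∀ᶠ α in 𝓝[>] (0 : ℝ), IntegrableOn
      (fun x : ℝ => x * Real.exp ((1 + c * α ^ γ) * μ *
        (∫ u in (0 : ℝ)..x, (1 - F (α * u))) - μ * x)) (Set.Ioi 0)) :
    Tendsto (fun α : ℝ => μ * ((-c) * α ^ γ) * Jq F μ c γ α)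
      (𝓝[>] (0 : ℝ)) (𝓝 1) ∧
    Tendsto (fun α : ℝ => μ ^ 2 * ((-c) * α ^ γ) ^ 2 * J1q F μ c γ α)
      (𝓝[>] (0 : ℝ)) (𝓝 1) := by
  have hF_nonneg : ∀ x, 0 ≤ F x := fun x =>
    (le_total 0 x).elim (fun hx => (hF_range x hx).1) fun hx => (hF_zero x hx).ge
  have hF := isBigO_pow_of_iteratedDerivWithin_eq_zero hF_smooth hF_derivs
  have hphi : ∀ α ∈ Ioi (0 : ℝ), 0 < μ * (-c * α ^ γ) := fun α hα =>
    mul_pos hμ (mul_pos (neg_pos.2 hc) (Real.rpow_pos_of_pos hα γ))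
  have hint0 : IntegrableOn (fun y : ℝ => Real.exp (-y)) (Ioi 0) := by
    simpa using Real.GammaIntegral_convergent one_pos
  have hint1 : IntegrableOn (fun y : ℝ => y * Real.exp (-y)) (Ioi 0) := by
    refine (Real.GammaIntegral_convergent two_pos).congr_fun (fun y _ => ?_) measurableSet_Ioi
    norm_num [mul_comm]
  have hval1 : ∫ y in Ioi (0 : ℝ), y * Real.exp (-y) = 1 := by
    rw [← Real.Gamma_two, Real.Gamma_eq_integral two_pos]
    refine setIntegral_congr_fun measurableSet_Ioi fun y _ => ?_
    norm_num [mul_comm]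
  constructor
  · have h := tendsto_integral_weight_mul_exp_rescaled (w := fun _ => 1) hF_mono hF_nonneg hF hμ hγ
      hc hγh continuous_const (by simpa using hint0)
    simp only [one_mul, integral_exp_neg_Ioi_zero] at h
    refine h.congr' ?_
    filter_upwards [self_mem_nhdsWithin] with α hα
    have hsub := integral_comp_mul_left_Ioi (fun x : ℝ => Real.exp ((1 + c * α ^ γ) * μ *
      (∫ u in (0 : ℝ)..x, (1 - F (α * u))) - μ * x)) 0 (inv_pos.2 (hphi α hα))
    rw [mul_zero, inv_inv, smul_eq_mul] at hsub
    exact hsub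
  · have h := tendsto_integral_weight_mul_exp_rescaled (w := fun y => y) hF_mono hF_nonneg hF hμ hγ
      hc hγh continuous_id hint1
    rw [hval1] at h
    refine h.congr' ?_
    filter_upwards [self_mem_nhdsWithin] with α hα
    have hsub := integral_comp_mul_left_Ioi (fun x : ℝ => x * Real.exp ((1 + c * α ^ γ) * μ *
      (∫ u in (0 : ℝ)..x, (1 - F (α * u))) - μ * x)) 0 (inv_pos.2 (hphi α hα))
    rw [mul_zero, inv_inv, smul_eq_mul] at hsub
    rw [← mul_pow, pow_two, mul_assoc, J1q, ← hsub, ← integral_const_mul]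
    refine setIntegral_congr_fun measurableSet_Ioi fun y _ => ?_
    have hne := (hphi α hα).ne'
    rw [mul_assoc _ y, mul_inv_cancel_left₀ hne]
end
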